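/- Structure of the inhomogeneity Φ (Lemma 5.7): Assume additionally b̃ ≥ m. Let α ∈ G ∪ N, let u be the corresponding solution, let ξ₁ = (b̃/ã)^{m/2} and τ₁ ∈ (0, b(α)) the unique point with u(τ₁) = ξ₁, and set β̄ = m·(1 − b̃/(ã·α^{2/m})) (which is positive since α > ξ₁). For β ∈ (0, β̄) define Φ_β(τ) = (2β·ã/m)·u(τ)^{1+2/m} − 2·cosh(τ)·f(u(τ)). Then there is a unique σ(β) ∈ (0, τ₁) such that Φ_β < 0 on (0, σ(β)) and Φ_β > 0 on (σ(β), b(α)); moreover β ↦ σ(β) is continuous and strictly decreasing on (0, β̄). -/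

import Mathlib

open Set Filter

/-!
On the positivity interval,
`Φ_β = (2a/m) u^{1+2/m} (β - h)` with `h(τ) = m cosh τ (1 - b / (a u(τ)^{2/m}))`, so everything
reduces to showing that `h` decreases strictly on `[0, τ₁]` from `β̄` to `0` and is nonpositive
afterwards; `σ` is then the inverse of `h`.

The energy `u'²/2 + G(u)`, `G' = F`, is nonincreasing and tends to a limit `≥ 0` at the end of the
interval, so `G(u) ≥ 0`, and hence `u > ξ₁`, at the origin and at every critical point of `u`.
If `u'(t) ≥ 0` held somewhere, the minimum of `u` on `[0, t]` would be at such a point, so that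
`F(u) > 0` on `[0, t]`, contradicting `(sinh · u')' = -sinh · F(u)`. Thus `u` decreases strictly.
Integrating the same identity where `F(u) ≥ F(u(t))` gives
`sinh t · F(u(t)) ≤ -(cosh t + 1) u'(t) < -2 cosh t · u'(t)`, and for `b ≥ m` this implies `h' < 0`.
-/

open scoped Topology

section Calculus

theorem exists_isMinOn_Icc_eq_left_or_deriv_eq_zero {f : ℝ → ℝ} {a b : ℝ} (hab : a < b)
    (hf : ContinuousOn f (Icc a b)) (hfb : DifferentiableAt ℝ f b) (hb : 0 ≤ deriv f b) :
    ∃ r ∈ Icc a b, IsMinOn f (Icc a b) r ∧ (r = a ∨ deriv f r = 0) := by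
  obtain ⟨r, hr, hmin⟩ := isCompact_Icc.exists_isMinOn (nonempty_Icc.2 hab.le) hf
  refine ⟨r, hr, hmin, ?_⟩
  rcases hr.1.eq_or_lt with har | har
  · exact .inl har.symm
  right
  rcases hr.2.eq_or_lt with rfl | hrb
  · have hcone : a - r ∈ posTangentConeAt (Icc a r) r :=
      sub_mem_posTangentConeAt_of_segment_subset
        ((convex_Icc a r).segment_subset (right_mem_Icc.2 hab.le) (left_mem_Icc.2 hab.le))
    have hslope : 0 ≤ (a - r) * deriv f r := by
      simpa using hmin.localize.hasFDerivWithinAt_nonneg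
        hfb.hasDerivAt.hasFDerivAt.hasFDerivWithinAt hcone
    nlinarith
  · exact (hmin.isLocalMin (Icc_mem_nhds har hrb)).deriv_eq_zero

theorem exists_strictAntiOn_continuousOn_rightInvOn {f : ℝ → ℝ} {a b : ℝ} (hab : a < b)
    (hf : ContinuousOn f (Icc a b)) (hanti : StrictAntiOn f (Icc a b)) :
    ∃ σ : ℝ → ℝ, MapsTo σ (Ioo (f b) (f a)) (Ioo a b) ∧ RightInvOn σ f (Ioo (f b) (f a)) ∧
      ContinuousOn σ (Ioo (f b) (f a)) ∧ StrictAntiOn σ (Ioo (f b) (f a)) := by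
  have hsurj : SurjOn f (Ioo a b) (Ioo (f b) (f a)) := intermediate_value_Ioo' hab.le hf
  have hmaps : MapsTo f (Ioo a b) (Ioo (f b) (f a)) := fun x hx =>
    ⟨hanti (Ioo_subset_Icc_self hx) (right_mem_Icc.2 hab.le) hx.2,
      hanti (left_mem_Icc.2 hab.le) (Ioo_subset_Icc_self hx) hx.1⟩
  have hbij : BijOn f (Ioo a b) (Ioo (f b) (f a)) :=
    ⟨hmaps, hanti.injOn.mono Ioo_subset_Icc_self, hsurj⟩
  let σ := Function.invFunOn f (Ioo a b)
  have hinv : InvOn σ f (Ioo a b) (Ioo (f b) (f a)) := hbij.invOn_invFunOn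
  have hσ : BijOn σ (Ioo (f b) (f a)) (Ioo a b) := hbij.symm hinv.symm
  have hσanti : StrictAntiOn σ (Ioo (f b) (f a)) := fun x hx y hy hxy => by
    rwa [← hanti.lt_iff_gt (Ioo_subset_Icc_self (hσ.mapsTo hx))
      (Ioo_subset_Icc_self (hσ.mapsTo hy)), hinv.2 hx, hinv.2 hy]
  refine ⟨σ, hσ.mapsTo, hinv.2, fun x hx => ContinuousAt.continuousWithinAt ?_, hσanti⟩
  have himage : σ '' Ioo (f b) (f a) ∈ 𝓝 (σ x) := by
    rw [hσ.image_eq]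
    exact isOpen_Ioo.mem_nhds (hσ.mapsTo hx)
  exact continuousAt_of_monotoneOn_of_image_mem_nhds (β := ℝᵒᵈ)
    hσanti.antitoneOn.dual_right (isOpen_Ioo.mem_nhds hx) himage

end Calculus

section SignChange

/-- `f` changes sign at `s` on `(0, ∞) ∩ J`: it is negative on `(0, s)` and positive on the part
of `J` beyond `s`. The set `J` is meant to be a lower set such as `(-∞, T)` or `ℝ`. -/
def ChangesSignAt (f : ℝ → ℝ) (J : Set ℝ) (s : ℝ) : Prop :=
  (∀ τ ∈ Ioo 0 s, f τ < 0) ∧ ∀ τ ∈ Ioi s ∩ J, 0 < f τ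

variable {J : Set ℝ} {τ₁ : ℝ}

theorem ChangesSignAt.le {f : ℝ → ℝ} {s s' : ℝ} (hJ : IsLowerSet J) (hsJ : s ∈ J) (hs' : 0 < s')
    (h : ChangesSignAt f J s) (h' : ChangesSignAt f J s') : s ≤ s' := by
  by_contra! hlt
  obtain ⟨r, hr', hr⟩ := exists_between hlt
  exact (h.1 r ⟨hs'.trans hr', hr⟩).asymm (h'.2 r ⟨hr', hJ hr.le hsJ⟩)

theorem existsUnique_changesSignAt {f : ℝ → ℝ} {s : ℝ} (hJ : IsLowerSet J) (hτ₁ : τ₁ ∈ J)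
    (hs : s ∈ Ioo 0 τ₁) (h : ChangesSignAt f J s) :
    ∃! s, s ∈ Ioo 0 τ₁ ∧ ChangesSignAt f J s :=
  ⟨s, ⟨hs, h⟩, fun _ hr => (hr.2.le hJ (hJ hr.1.2.le hτ₁) hs.1 h).antisymm
    (h.le hJ (hJ hs.2.le hτ₁) hr.1.1 hr.2)⟩

theorem exists_changesSignAt_of_eq_mul_sub {P : ℝ → ℝ → ℝ} {k h : ℝ → ℝ} (hJ : IsLowerSet J)
    (hτ₁ : τ₁ ∈ Ioi 0 ∩ J) (hk : ∀ τ ∈ Ioi 0 ∩ J, 0 < k τ)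
    (hP : ∀ β, ∀ τ ∈ Ioi 0 ∩ J, P β τ = k τ * (β - h τ))
    (hcont : ContinuousOn h (Icc 0 τ₁)) (hanti : StrictAntiOn h (Icc 0 τ₁)) (hzero : h τ₁ = 0)
    (hnonpos : ∀ τ ∈ Ici τ₁ ∩ J, h τ ≤ 0) :
    ∃ σ : ℝ → ℝ, (∀ β ∈ Ioo 0 (h 0), σ β ∈ Ioo 0 τ₁ ∧ ChangesSignAt (P β) J (σ β)) ∧
      ContinuousOn σ (Ioo 0 (h 0)) ∧ StrictAntiOn σ (Ioo 0 (h 0)) := by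
  obtain ⟨σ, hmaps, hinv, hσcont, hσanti⟩ :=
    exists_strictAntiOn_continuousOn_rightInvOn hτ₁.1 hcont hanti
  rw [hzero] at hmaps hinv hσcont hσanti
  refine ⟨σ, fun β hβ => ⟨hmaps hβ, fun τ hτ => ?_, fun τ hτ => ?_⟩, hσcont, hσanti⟩
  · have hτ₁' : τ ≤ τ₁ := hτ.2.le.trans (hmaps hβ).2.le
    have hτJ : τ ∈ Ioi 0 ∩ J := ⟨hτ.1, hJ hτ₁' hτ₁.2⟩
    have hlt : β < h τ := by
      simpa only [hinv hβ] using hanti ⟨hτ.1.le, hτ₁'⟩ (Ioo_subset_Icc_self (hmaps hβ)) hτ.2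
    rw [hP β τ hτJ]
    exact mul_neg_of_pos_of_neg (hk τ hτJ) (sub_neg.2 hlt)
  · have hτJ : τ ∈ Ioi 0 ∩ J := ⟨(hmaps hβ).1.trans hτ.1, hτ.2⟩
    have hlt : h τ < β := by
      rcases le_total τ τ₁ with hle | hle
      · simpa only [hinv hβ] using
          hanti (Ioo_subset_Icc_self (hmaps hβ)) ⟨hτJ.1.le, hle⟩ hτ.1
      · exact (hnonpos τ ⟨hle, hτ.2⟩).trans_lt hβ.1
    rw [hP β τ hτJ]
    exact mul_pos (hk τ hτJ) (sub_pos.2 hlt)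

end SignChange

section RadialSolution

/-- `u` is a regular radial solution of `Δu + F(u) = 0` on the hyperbolic plane, as a function of
the distance `τ` from the origin. The equation is imposed on `(0, ∞) ∩ J` only, where `J` is
meant to be a lower set, so that this is `(0, T)`, `(0, T]` or `(0, ∞)`. -/
structure IsRadialSolutionOn (F u : ℝ → ℝ) (J : Set ℝ) : Prop where
  continuousOn : ContinuousOn u (Ici 0 ∩ J)
  differentiableAt : ∀ τ ∈ Ioi 0 ∩ J, DifferentiableAt ℝ u τ
  differentiableAt_deriv : ∀ τ ∈ Ioi 0 ∩ J, DifferentiableAt ℝ (deriv u) τ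
  ode : ∀ τ ∈ Ioi 0 ∩ J,
    deriv (deriv u) τ + (Real.cosh τ / Real.sinh τ) * deriv u τ + F (u τ) = 0
  tendsto_deriv : Tendsto (deriv u) (𝓝[>] 0) (𝓝 0)

/-- The energy `u'²/2 + G(u)` of `u`, for a primitive `G` of the nonlinearity. -/
noncomputable def radialEnergy (G u : ℝ → ℝ) (τ : ℝ) : ℝ :=
  deriv u τ ^ 2 / 2 + G (u τ)

namespace IsRadialSolutionOn

variable {F G u : ℝ → ℝ} {J : Set ℝ} {t : ℝ}

theorem hasDerivAt_sinh_mul_deriv (hu : IsRadialSolutionOn F u J) (ht : t ∈ Ioi 0 ∩ J) :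
    HasDerivAt (fun s => Real.sinh s * deriv u s) (-(Real.sinh t * F (u t))) t := by
  refine ((Real.hasDerivAt_sinh t).mul (hu.differentiableAt_deriv t ht).hasDerivAt).congr_deriv ?_
  have hsinh : Real.sinh t ≠ 0 := (Real.sinh_pos_iff.2 ht.1).ne'
  rw [eq_sub_of_add_eq (eq_neg_of_add_eq_zero_left (hu.ode t ht))]
  field_simp
  ring

theorem continuousOn_sinh_mul_deriv (hu : IsRadialSolutionOn F u J) :
    ContinuousOn (fun s => Real.sinh s * deriv u s) (Ici 0 ∩ J) := by
  intro t ht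
  rcases (show 0 ≤ t from ht.1).eq_or_lt with rfl | ht0
  · have hlim : Tendsto (fun s => Real.sinh s * deriv u s) (𝓝[>] 0) (𝓝 (0 * 0)) :=
      (Real.sinh_zero ▸ Real.continuous_sinh.continuousWithinAt.tendsto).mul hu.tendsto_deriv
    have hcont : ContinuousWithinAt (fun s => Real.sinh s * deriv u s) (Ioi 0) 0 := by
      simpa [ContinuousWithinAt] using hlim
    exact (continuousWithinAt_Ioi_iff_Ici.1 hcont).mono inter_subset_left
  · exact (hu.hasDerivAt_sinh_mul_deriv ⟨ht0, ht.2⟩).continuousAt.continuousWithinAt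

theorem mul_sinh_le (hu : IsRadialSolutionOn F u J) (hJ : IsLowerSet J) (ht : t ∈ Ioi 0 ∩ J)
    {c : ℝ} (hc : ∀ s ∈ Ioo 0 t, c ≤ F (u s)) :
    c * Real.sinh t ≤ (Real.cosh t + 1) * -deriv u t := by
  have ht0 : 0 < t := ht.1
  have hIoo : ∀ s ∈ Ioo 0 t, s ∈ Ioi 0 ∩ J := fun s hs => ⟨hs.1, hJ hs.2.le ht.2⟩
  have hanti : AntitoneOn (fun s => Real.sinh s * deriv u s + c * Real.cosh s) (Icc 0 t) := by
    refine antitoneOn_of_hasDerivWithinAt_nonpos (convex_Icc 0 t)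
      (f' := fun s => -(Real.sinh s * F (u s)) + c * Real.sinh s) ?_ ?_ ?_
    · exact (hu.continuousOn_sinh_mul_deriv.mono fun s hs => ⟨hs.1, hJ hs.2 ht.2⟩).add
        (Real.continuous_cosh.const_mul c).continuousOn
    · intro s hs
      rw [interior_Icc] at hs
      exact ((hu.hasDerivAt_sinh_mul_deriv (hIoo s hs)).add
        ((Real.hasDerivAt_cosh s).const_mul c)).hasDerivWithinAt
    · intro s hs
      rw [interior_Icc] at hs
      nlinarith [hc s hs, Real.sinh_pos_iff.2 hs.1]
  have hflux : c * (Real.cosh t - 1) ≤ Real.sinh t * -deriv u t := by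
    have := hanti (left_mem_Icc.2 ht0.le) (right_mem_Icc.2 ht0.le) ht0.le
    simp only [Real.sinh_zero, zero_mul, Real.cosh_zero] at this
    linarith
  refine le_of_mul_le_mul_left ?_ (Real.sinh_pos_iff.2 ht0)
  calc Real.sinh t * (c * Real.sinh t) = (Real.cosh t + 1) * (c * (Real.cosh t - 1)) := by
        linear_combination c * Real.sinh_sq t
    _ ≤ (Real.cosh t + 1) * (Real.sinh t * -deriv u t) :=
        mul_le_mul_of_nonneg_left hflux (by linarith [Real.cosh_pos t])
    _ = Real.sinh t * ((Real.cosh t + 1) * -deriv u t) := by ring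

theorem antitoneOn_radialEnergy (hu : IsRadialSolutionOn F u J) (hJ : IsLowerSet J)
    (hG : ∀ s, HasDerivAt G (F s) s) : AntitoneOn (radialEnergy G u) (Ioi 0 ∩ J) := by
  have hderiv : ∀ τ ∈ Ioi 0 ∩ J, HasDerivAt (radialEnergy G u)
      (-(Real.cosh τ / Real.sinh τ * deriv u τ ^ 2)) τ := fun τ hτ => by
    have hkinetic := ((hu.differentiableAt_deriv τ hτ).hasDerivAt.pow 2).div_const 2
    have hpotential := (hG (u τ)).comp τ (hu.differentiableAt τ hτ).hasDerivAt
    refine (hkinetic.add hpotential).congr_deriv ?_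
    push_cast
    linear_combination deriv u τ * hu.ode τ hτ
  refine antitoneOn_of_hasDerivWithinAt_nonpos (ordConnected_Ioi.inter hJ.ordConnected).convex
    (fun τ hτ => (hderiv τ hτ).continuousAt.continuousWithinAt)
    (fun τ hτ => (hderiv τ (interior_subset hτ)).hasDerivWithinAt) fun τ hτ => ?_
  have hsinh : 0 < Real.sinh τ := Real.sinh_pos_iff.2 (interior_subset hτ).1
  exact neg_nonpos.2 (by positivity)

theorem radialEnergy_nonneg (hu : IsRadialSolutionOn F u J) (hJ : IsLowerSet J)
    (hG : ∀ s, HasDerivAt G (F s) s) (hG0 : G 0 = 0) {l : Filter ℝ} [l.NeBot]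
    (hl : ∀ t ∈ J, Ici t ∩ J ∈ l) (hlim : Tendsto u l (𝓝 0)) :
    ∀ t ∈ Ioi 0 ∩ J, 0 ≤ radialEnergy G u t := by
  intro t ht
  have hGlim : Tendsto (fun τ => G (u τ)) l (𝓝 0) :=
    hG0 ▸ (hG 0).continuousAt.tendsto.comp hlim
  refine le_of_tendsto hGlim ?_
  filter_upwards [hl t ht.2] with τ hτ
  have ht0 : 0 < t := ht.1
  calc G (u τ) ≤ radialEnergy G u τ := le_add_of_nonneg_left (by positivity)
    _ ≤ radialEnergy G u t :=
      hu.antitoneOn_radialEnergy hJ hG ht ⟨ht0.trans_le hτ.1, hτ.2⟩ hτ.1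

theorem potential_zero_nonneg (hu : IsRadialSolutionOn F u J) (hJ : IsLowerSet J)
    (hG : ContinuousAt G (u 0)) (henergy : ∀ τ ∈ Ioi 0 ∩ J, 0 ≤ radialEnergy G u τ)
    (ht : t ∈ Ioi 0 ∩ J) : 0 ≤ G (u 0) := by
  have hIoo : ∀ s ∈ Ioo 0 t, s ∈ Ioi 0 ∩ J := fun s hs => ⟨hs.1, hJ hs.2.le ht.2⟩
  have hmem : Ioo 0 t ∈ 𝓝[>] 0 := Ioo_mem_nhdsGT ht.1
  have hu0 : Tendsto u (𝓝[>] 0) (𝓝 (u 0)) :=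
    (hu.continuousOn 0 ⟨self_mem_Ici, hJ ht.1.le ht.2⟩).tendsto.mono_left
      (nhdsWithin_le_of_mem (mem_of_superset hmem fun s hs => ⟨hs.1.le, (hIoo s hs).2⟩))
  have hlim : Tendsto (radialEnergy G u) (𝓝[>] 0) (𝓝 (0 ^ 2 / 2 + G (u 0))) :=
    ((hu.tendsto_deriv.pow 2).div_const 2).add (hG.tendsto.comp hu0)
  have hlim_nonneg : 0 ≤ 0 ^ 2 / 2 + G (u 0) := by
    refine ge_of_tendsto hlim ?_
    filter_upwards [hmem] with s hs using henergy s (hIoo s hs)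
  simpa using hlim_nonneg

theorem deriv_neg (hu : IsRadialSolutionOn F u J) (hJ : IsLowerSet J) {ξ : ℝ}
    (hFpos : ∀ s ∈ Ioi ξ, 0 < F s) (hFmono : MonotoneOn F (Ioi ξ))
    (hGcont : ContinuousAt G (u 0)) (hGneg : ∀ s ∈ Ioc 0 ξ, G s < 0)
    (henergy : ∀ τ ∈ Ioi 0 ∩ J, 0 ≤ radialEnergy G u τ) (hpos : ∀ τ ∈ Ici 0 ∩ J, 0 < u τ) :
    ∀ t ∈ Ioi 0 ∩ J, deriv u t < 0 := by
  intro t ht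
  have ht0 : 0 < t := ht.1
  by_contra! hderiv
  have hsub : Icc 0 t ⊆ Ici 0 ∩ J := fun s hs => ⟨hs.1, hJ hs.2 ht.2⟩
  obtain ⟨r, hr, hmin, hcrit⟩ := exists_isMinOn_Icc_eq_left_or_deriv_eq_zero ht0
    (hu.continuousOn.mono hsub) (hu.differentiableAt t ht) hderiv
  have hGr : 0 ≤ G (u r) := by
    rcases hr.1.eq_or_lt with rfl | hr0
    · exact hu.potential_zero_nonneg hJ hGcont henergy ht
    · simpa [radialEnergy, hcrit.resolve_left hr0.ne'] using henergy r ⟨hr0, (hsub hr).2⟩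
  have hξ : ξ < u r := by
    by_contra! hle
    exact (hGneg (u r) ⟨hpos r (hsub hr), hle⟩).not_ge hGr
  have hF : ∀ s ∈ Ioo 0 t, F (u r) ≤ F (u s) := fun s hs =>
    have hle : u r ≤ u s := hmin (Ioo_subset_Icc_self hs)
    hFmono hξ (hξ.trans_le hle) hle
  have hforce : 0 < F (u r) * Real.sinh t := mul_pos (hFpos _ hξ) (Real.sinh_pos_iff.2 ht0)
  nlinarith [hu.mul_sinh_le hJ ht hF, Real.cosh_pos t]

theorem strictAntiOn (hu : IsRadialSolutionOn F u J) (hJ : IsLowerSet J)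
    (hneg : ∀ τ ∈ Ioi 0 ∩ J, deriv u τ < 0) : StrictAntiOn u (Ici 0 ∩ J) := by
  refine strictAntiOn_of_deriv_neg (ordConnected_Ici.inter hJ.ordConnected).convex
    hu.continuousOn fun τ hτ => hneg τ ?_
  rw [interior_inter, interior_Ici] at hτ
  exact ⟨hτ.1, interior_subset hτ.2⟩

end IsRadialSolutionOn

end RadialSolution

section PowerNonlinearity

/-- The nonlinearity `f(s) = a s^{1+p} - b s`; the paper's exponent is `p = 2/m`. -/
noncomputable def powerNonlinearity (a b p s : ℝ) : ℝ :=
  a * s ^ (1 + p) - b * s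

/-- The primitive of `powerNonlinearity a b p` vanishing at `0`. -/
noncomputable def powerPotential (a b p s : ℝ) : ℝ :=
  a / (2 + p) * s ^ (2 + p) - b / 2 * s ^ 2

variable {a b p s : ℝ}

theorem powerNonlinearity_eq_mul (hs : 0 < s) :
    powerNonlinearity a b p s = s * (a * s ^ p - b) := by
  rw [powerNonlinearity, Real.rpow_add hs, Real.rpow_one]
  ring

theorem lt_mul_rpow_iff (ha : 0 < a) (hb : 0 ≤ b) (hp : 0 < p) (hs : 0 ≤ s) :
    b < a * s ^ p ↔ (b / a) ^ p⁻¹ < s := by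
  rw [Real.rpow_inv_lt_iff_of_pos (by positivity) hs hp, div_lt_iff₀' ha]

theorem powerNonlinearity_pos (ha : 0 < a) (hb : 0 ≤ b) (hp : 0 < p)
    (hs : s ∈ Ioi ((b / a) ^ p⁻¹)) : 0 < powerNonlinearity a b p s := by
  have hs0 : 0 < s := lt_of_le_of_lt (by positivity) hs
  rw [powerNonlinearity_eq_mul hs0]
  exact mul_pos hs0 (sub_pos.2 ((lt_mul_rpow_iff ha hb hp hs0.le).2 hs))

theorem monotoneOn_powerNonlinearity (ha : 0 < a) (hb : 0 ≤ b) (hp : 0 < p) :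
    MonotoneOn (powerNonlinearity a b p) (Ioi ((b / a) ^ p⁻¹)) := by
  intro x hx y _ hxy
  have hx0 : 0 < x := lt_of_le_of_lt (by positivity) hx
  have hfactor : 0 < a * x ^ p - b := sub_pos.2 ((lt_mul_rpow_iff ha hb hp hx0.le).2 hx)
  have hy0 : 0 < y := hx0.trans_le hxy
  rw [powerNonlinearity_eq_mul hx0, powerNonlinearity_eq_mul hy0]
  gcongr

theorem hasDerivAt_powerPotential (hp : 0 < p) (s : ℝ) :
    HasDerivAt (powerPotential a b p) (powerNonlinearity a b p s) s := by
  have hpow := (Real.hasDerivAt_rpow_const (x := s) (p := 2 + p) (.inr (by linarith))).const_mul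
    (a / (2 + p))
  refine (hpow.sub ((hasDerivAt_pow 2 s).const_mul (b / 2))).congr_deriv ?_
  rw [powerNonlinearity, show 2 + p - 1 = 1 + p by ring]
  push_cast
  field_simp

theorem powerPotential_zero (hp : 0 < p) : powerPotential a b p 0 = 0 := by
  rw [powerPotential, Real.zero_rpow (by linarith)]
  ring

theorem powerPotential_neg (ha : 0 < a) (hb : 0 < b) (hp : 0 < p)
    (hs : s ∈ Ioc 0 ((b / a) ^ p⁻¹)) : powerPotential a b p s < 0 := by
  have hs0 : 0 < s := hs.1
  have hle : a * s ^ p ≤ b := not_lt.1 fun h =>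
    hs.2.not_gt ((lt_mul_rpow_iff ha hb.le hp hs0.le).1 h)
  have hcoeff : a * s ^ p / (2 + p) < b / 2 := by
    rw [div_lt_div_iff₀ (by linarith) two_pos]
    nlinarith
  have hfactor : powerPotential a b p s = s ^ 2 * (a * s ^ p / (2 + p) - b / 2) := by
    rw [powerPotential, Real.rpow_add hs0, Real.rpow_two]
    ring
  rw [hfactor]
  exact mul_neg_of_pos_of_neg (pow_pos hs0 2) (sub_neg.2 hcoeff)

end PowerNonlinearity

section Inhomogeneity

/-- The inhomogeneity `Φ_β(τ) = β (u f'(u) - f(u)) - 2 cosh τ f(u)`, written out for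
`f = powerNonlinearity a b (2 / m)`. -/
noncomputable def inhomogeneity (m a b : ℝ) (u : ℝ → ℝ) (β τ : ℝ) : ℝ :=
  2 * β * a / m * u τ ^ (1 + 2 / m) - 2 * Real.cosh τ * powerNonlinearity a b (2 / m) (u τ)

/-- The parameter `β` for which `Φ_β` vanishes at `τ`, where `u τ > 0`; at `τ = 0` it is the
paper's `β̄`. -/
noncomputable def zeroParameter (m a b : ℝ) (u : ℝ → ℝ) (τ : ℝ) : ℝ :=
  m * Real.cosh τ * (1 - b / (a * u τ ^ (2 / m)))

variable {m a b : ℝ} {u : ℝ → ℝ} {J : Set ℝ} {τ τ₁ : ℝ}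

theorem inhomogeneity_eq_mul_sub (hm : m ≠ 0) (ha : a ≠ 0) (hu : 0 < u τ) (β : ℝ) :
    inhomogeneity m a b u β τ =
      2 * a / m * u τ ^ (1 + 2 / m) * (β - zeroParameter m a b u τ) := by
  have hpow : u τ ^ (2 / m) ≠ 0 := (Real.rpow_pos_of_pos hu _).ne'
  rw [inhomogeneity, zeroParameter, powerNonlinearity_eq_mul hu, Real.rpow_add hu, Real.rpow_one]
  field_simp

theorem zeroParameter_zero : zeroParameter m a b u 0 = m * (1 - b / (a * u 0 ^ (2 / m))) := by
  rw [zeroParameter, Real.cosh_zero, mul_one]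

theorem zeroParameter_eq_zero (hm : 0 < m) (ha : 0 < a) (hb : 0 < b)
    (hu : u τ = (b / a) ^ (2 / m)⁻¹) : zeroParameter m a b u τ = 0 := by
  have hpow : u τ ^ (2 / m) = b / a := by
    rw [hu, Real.rpow_inv_rpow (by positivity) (by positivity)]
  rw [zeroParameter, hpow, mul_div_cancel₀ _ ha.ne', div_self hb.ne', sub_self, mul_zero]

theorem zeroParameter_nonpos (hm : 0 < m) (ha : 0 < a) (hb : 0 ≤ b) (hpos : 0 < u τ)
    (hu : u τ ≤ (b / a) ^ (2 / m)⁻¹) : zeroParameter m a b u τ ≤ 0 := by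
  have hle : a * u τ ^ (2 / m) ≤ b := not_lt.1 fun h =>
    hu.not_gt ((lt_mul_rpow_iff ha hb (by positivity) hpos.le).1 h)
  have hone : 1 ≤ b / (a * u τ ^ (2 / m)) := (one_le_div (by positivity)).2 hle
  exact mul_nonpos_of_nonneg_of_nonpos (mul_nonneg hm.le (Real.cosh_pos τ).le)
    (sub_nonpos.2 hone)

theorem continuousOn_zeroParameter {s : Set ℝ} (ha : a ≠ 0) (hu : ContinuousOn u s)
    (hpos : ∀ τ ∈ s, 0 < u τ) : ContinuousOn (zeroParameter m a b u) s := by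
  refine (Real.continuous_cosh.const_mul m).continuousOn.mul (continuousOn_const.sub
    (continuousOn_const.div (continuousOn_const.mul ?_) fun τ hτ => ?_))
  · exact hu.rpow_const fun τ hτ => .inl (hpos τ hτ).ne'
  · exact mul_ne_zero ha (Real.rpow_pos_of_pos (hpos τ hτ) _).ne'

theorem hasDerivAt_zeroParameter (hm : m ≠ 0) (ha : a ≠ 0) (hu : DifferentiableAt ℝ u τ)
    (hpos : 0 < u τ) :
    HasDerivAt (zeroParameter m a b u)
      ((m * (Real.sinh τ * powerNonlinearity a b (2 / m) (u τ)) +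
        2 * b * (Real.cosh τ * deriv u τ)) / (a * u τ ^ (2 / m) * u τ)) τ := by
  have hpow : u τ ^ (2 / m) ≠ 0 := (Real.rpow_pos_of_pos hpos _).ne'
  have hquot := (hasDerivAt_const τ b).div
    ((hu.hasDerivAt.rpow_const (p := 2 / m) (.inl hpos.ne')).const_mul a) (mul_ne_zero ha hpow)
  refine (((Real.hasDerivAt_cosh τ).const_mul m).mul (hquot.const_sub 1)).congr_deriv ?_
  simp only [Pi.div_apply]
  rw [powerNonlinearity_eq_mul hpos, Real.rpow_sub_one hpos.ne']
  field_simp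
  ring

theorem IsRadialSolutionOn.deriv_neg_of_powerNonlinearity {p : ℝ} (ha : 0 < a) (hb : 0 < b)
    (hp : 0 < p) (hJ : IsLowerSet J) (hu : IsRadialSolutionOn (powerNonlinearity a b p) u J)
    (hpos : ∀ τ ∈ Ici 0 ∩ J, 0 < u τ) {l : Filter ℝ} [l.NeBot]
    (hl : ∀ t ∈ J, Ici t ∩ J ∈ l) (hlim : Tendsto u l (𝓝 0)) :
    ∀ τ ∈ Ioi 0 ∩ J, deriv u τ < 0 :=
  hu.deriv_neg hJ (fun _ => powerNonlinearity_pos ha hb.le hp)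
    (monotoneOn_powerNonlinearity ha hb.le hp) (hasDerivAt_powerPotential hp (u 0)).continuousAt
    (fun _ => powerPotential_neg ha hb hp)
    (hu.radialEnergy_nonneg hJ (hasDerivAt_powerPotential hp) (powerPotential_zero hp) hl hlim)
    hpos

theorem strictAntiOn_zeroParameter (hm : 0 < m) (ha : 0 < a) (hb : m ≤ b) (hJ : IsLowerSet J)
    (hu : IsRadialSolutionOn (powerNonlinearity a b (2 / m)) u J)
    (hpos : ∀ τ ∈ Ici 0 ∩ J, 0 < u τ) (hneg : ∀ τ ∈ Ioi 0 ∩ J, deriv u τ < 0) (hτ₁ : τ₁ ∈ J)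
    (huτ₁ : u τ₁ = (b / a) ^ (2 / m)⁻¹) : StrictAntiOn (zeroParameter m a b u) (Icc 0 τ₁) := by
  have hanti : StrictAntiOn u (Ici 0 ∩ J) := hu.strictAntiOn hJ hneg
  have hsub : Icc 0 τ₁ ⊆ Ici 0 ∩ J := fun s hs => ⟨hs.1, hJ hs.2 hτ₁⟩
  refine strictAntiOn_of_deriv_neg (convex_Icc 0 τ₁) (continuousOn_zeroParameter ha.ne'
    (hu.continuousOn.mono hsub) fun s hs => hpos s (hsub hs)) fun t ht => ?_
  rw [interior_Icc] at ht
  have htJ : t ∈ Ioi 0 ∩ J := ⟨ht.1, hJ ht.2.le hτ₁⟩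
  have htpos : 0 < u t := hpos t ⟨ht.1.le, htJ.2⟩
  have hlt : ∀ ⦃r s⦄, 0 ≤ r → r < s → s ≤ τ₁ → u s < u r := fun r s hr hrs hs =>
    hanti (hsub ⟨hr, hrs.le.trans hs⟩) (hsub ⟨hr.trans hrs.le, hs⟩) hrs
  have hξ : (b / a) ^ (2 / m)⁻¹ < u t := huτ₁ ▸ hlt ht.1.le ht.2 le_rfl
  have hforce : powerNonlinearity a b (2 / m) (u t) * Real.sinh t ≤
      (Real.cosh t + 1) * -deriv u t := by
    refine hu.mul_sinh_le hJ htJ fun s hs => ?_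
    have hts : u t < u s := hlt hs.1.le hs.2 ht.2.le
    exact monotoneOn_powerNonlinearity ha (by linarith) (by positivity) hξ (hξ.trans hts) hts.le
  have hspeed : 0 < -deriv u t := neg_pos.2 (hneg t htJ)
  have hcosh : 1 < Real.cosh t := Real.one_lt_cosh.2 ht.1.ne'
  have hnum : m * (Real.sinh t * powerNonlinearity a b (2 / m) (u t)) <
      2 * b * (Real.cosh t * -deriv u t) := by
    calc m * (Real.sinh t * powerNonlinearity a b (2 / m) (u t))
        ≤ m * ((Real.cosh t + 1) * -deriv u t) := by
          rw [mul_comm (Real.sinh t)]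
          gcongr
      _ < m * ((Real.cosh t + Real.cosh t) * -deriv u t) := by gcongr
      _ ≤ b * ((Real.cosh t + Real.cosh t) * -deriv u t) := by gcongr
      _ = 2 * b * (Real.cosh t * -deriv u t) := by ring
  rw [(hasDerivAt_zeroParameter hm.ne' ha.ne' (hu.differentiableAt t htJ) htpos).deriv]
  exact div_neg_of_neg_of_pos (by linarith) (by positivity)

end Inhomogeneity

/-- `J` is the lower set with positivity interval `(0, b(α)) = (0, ∞) ∩ J`, and `l` is the filter
of the approach to its right end: `𝓝[<] b(α)` for `α ∈ N`, `atTop` for `α ∈ G`. -/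
theorem inhomogeneity_structure_general {m a b : ℝ} (hm : 0 < m) (ha : 0 < a) (hb : m ≤ b)
    {u : ℝ → ℝ} {J : Set ℝ} (hJ : IsLowerSet J)
    (hu : IsRadialSolutionOn (powerNonlinearity a b (2 / m)) u J)
    (hpos : ∀ τ ∈ Ici 0 ∩ J, 0 < u τ) {l : Filter ℝ} [l.NeBot]
    (hl : ∀ t ∈ J, Ici t ∩ J ∈ l) (hlim : Tendsto u l (𝓝 0))
    {τ₁ : ℝ} (hτ₁ : τ₁ ∈ Ioi 0 ∩ J) (huτ₁ : u τ₁ = (b / a) ^ (m / 2)) :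
    (∀ β ∈ Ioo 0 (m * (1 - b / (a * u 0 ^ (2 / m)))),
      ∃! s, s ∈ Ioo 0 τ₁ ∧ ChangesSignAt (inhomogeneity m a b u β) J s) ∧
    ∃ σ : ℝ → ℝ,
      (∀ β ∈ Ioo 0 (m * (1 - b / (a * u 0 ^ (2 / m)))),
        σ β ∈ Ioo 0 τ₁ ∧ ChangesSignAt (inhomogeneity m a b u β) J (σ β)) ∧
      ContinuousOn σ (Ioo 0 (m * (1 - b / (a * u 0 ^ (2 / m))))) ∧
      StrictAntiOn σ (Ioo 0 (m * (1 - b / (a * u 0 ^ (2 / m))))) := by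
  have hb0 : 0 < b := hm.trans_le hb
  rw [← inv_div 2 m] at huτ₁
  have hτ₁' : τ₁ ∈ Ici 0 ∩ J := ⟨Ioi_subset_Ici_self hτ₁.1, hτ₁.2⟩
  have hneg := hu.deriv_neg_of_powerNonlinearity ha hb0 (by positivity) hJ hpos hl hlim
  have hcont : ContinuousOn (zeroParameter m a b u) (Icc 0 τ₁) :=
    (continuousOn_zeroParameter ha.ne' hu.continuousOn hpos).mono
      fun τ hτ => ⟨hτ.1, hJ hτ.2 hτ₁.2⟩
  have hpos' : ∀ τ ∈ Ioi 0 ∩ J, 0 < u τ := fun τ hτ =>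
    hpos τ ⟨Ioi_subset_Ici_self hτ.1, hτ.2⟩
  obtain ⟨σ, hσ, hreg⟩ := exists_changesSignAt_of_eq_mul_sub hJ hτ₁
    (k := fun τ => 2 * a / m * u τ ^ (1 + 2 / m))
    (fun τ hτ => mul_pos (by positivity) (Real.rpow_pos_of_pos (hpos' τ hτ) _))
    (fun β τ hτ => inhomogeneity_eq_mul_sub hm.ne' ha.ne' (hpos' τ hτ) β) hcont
    (strictAntiOn_zeroParameter hm ha hb hJ hu hpos hneg hτ₁.2 huτ₁)
    (zeroParameter_eq_zero hm ha hb0 huτ₁) fun τ hτ => by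
      have hτ' : τ ∈ Ici 0 ∩ J := ⟨Ici_subset_Ici.2 hτ₁'.1 hτ.1, hτ.2⟩
      exact zeroParameter_nonpos hm ha hb0.le (hpos τ hτ')
        (huτ₁ ▸ (hu.strictAntiOn hJ hneg).antitoneOn hτ₁' hτ' hτ.1)
  rw [zeroParameter_zero] at hσ hreg
  exact ⟨fun β hβ => existsUnique_changesSignAt hJ hτ₁.2 (hσ β hβ).1 (hσ β hβ).2, σ, hσ, hreg⟩

/-- Structure of the inhomogeneity `Φ` (Lemma 5.7): assume `b̃ ≥ m`, let
`α ∈ G ∪ N` with solution `u`, `ξ₁ = (b̃/ã)^{m/2}`, `τ₁ ∈ (0, b(α))` the point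
with `u(τ₁) = ξ₁`, and `β̄ = m·(1 − b̃/(ã·α^{2/m}))`.  For `β ∈ (0, β̄)` let
`Φ_β(τ) = (2βã/m)·u(τ)^{1+2/m} − 2·cosh(τ)·f(u(τ))`.  Then there is a unique
`σ(β) ∈ (0, τ₁)` with `Φ_β < 0` on `(0, σ(β))` and `Φ_β > 0` on `(σ(β), b(α))`;
moreover `β ↦ σ(β)` is continuous and strictly decreasing on `(0, β̄)`.
The two conjuncts treat the cases `α ∈ N` and `α ∈ G`. -/
theorem inhomogeneity_structure
    (m a b : ℝ) (hm : 2 < m) (ha : 0 < a) (hb : m ≤ b)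
    (F : ℝ → ℝ) (hF : ∀ s, F s = a * s ^ (1 + 2 / m) - b * s)
    (α : ℝ) (hα : 0 < α)
    (u : ℝ → ℝ)
    (huc : ContinuousOn u (Ici 0))
    (hud : ∀ τ ∈ Ioi (0 : ℝ), DifferentiableAt ℝ u τ)
    (hud' : ∀ τ ∈ Ioi (0 : ℝ), DifferentiableAt ℝ (deriv u) τ)
    (hode : ∀ τ ∈ Ioi (0 : ℝ),
      deriv (deriv u) τ + (Real.cosh τ / Real.sinh τ) * deriv u τ + F (u τ) = 0)
    (hu0 : u 0 = α)
    (hu'0 : Tendsto (deriv u) (nhdsWithin 0 (Ioi 0)) (nhds 0))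
    (ξ₁ : ℝ) (hξ₁ : ξ₁ = (b / a) ^ (m / 2))
    (βmax : ℝ) (hβmax : βmax = m * (1 - b / (a * α ^ (2 / m))))
    (P : ℝ → ℝ → ℝ)
    (hP : ∀ β τ, P β τ = 2 * β * a / m * u τ ^ (1 + 2 / m)
        - 2 * Real.cosh τ * F (u τ)) :
    (∀ bα : ℝ, 0 < bα → u bα = 0 → (∀ τ ∈ Ico 0 bα, 0 < u τ) →
        ∀ τ₁ ∈ Ioo 0 bα, u τ₁ = ξ₁ →
          (∀ β ∈ Ioo 0 βmax, ∃! s, s ∈ Ioo 0 τ₁ ∧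
              (∀ τ ∈ Ioo 0 s, P β τ < 0) ∧ (∀ τ ∈ Ioo s bα, 0 < P β τ)) ∧
          ∃ σ : ℝ → ℝ,
            (∀ β ∈ Ioo 0 βmax, σ β ∈ Ioo 0 τ₁ ∧
              (∀ τ ∈ Ioo 0 (σ β), P β τ < 0) ∧ (∀ τ ∈ Ioo (σ β) bα, 0 < P β τ)) ∧
            ContinuousOn σ (Ioo 0 βmax) ∧ StrictAntiOn σ (Ioo 0 βmax)) ∧
    ((∀ τ ∈ Ioi (0 : ℝ), 0 < u τ) → Tendsto u atTop (nhds 0) →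
        ∀ τ₁ ∈ Ioi (0 : ℝ), u τ₁ = ξ₁ →
          (∀ β ∈ Ioo 0 βmax, ∃! s, s ∈ Ioo 0 τ₁ ∧
              (∀ τ ∈ Ioo 0 s, P β τ < 0) ∧ (∀ τ ∈ Ioi s, 0 < P β τ)) ∧
          ∃ σ : ℝ → ℝ,
            (∀ β ∈ Ioo 0 βmax, σ β ∈ Ioo 0 τ₁ ∧
              (∀ τ ∈ Ioo 0 (σ β), P β τ < 0) ∧ (∀ τ ∈ Ioi (σ β), 0 < P β τ)) ∧
            ContinuousOn σ (Ioo 0 βmax) ∧ StrictAntiOn σ (Ioo 0 βmax)) := by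
  obtain rfl : F = powerNonlinearity a b (2 / m) := funext hF
  obtain rfl : P = inhomogeneity m a b u := funext₂ hP
  subst hu0 hξ₁ hβmax
  have hm0 : 0 < m := two_pos.trans hm
  have hu (J : Set ℝ) : IsRadialSolutionOn (powerNonlinearity a b (2 / m)) u J :=
    ⟨huc.mono inter_subset_left, fun τ hτ => hud τ hτ.1, fun τ hτ => hud' τ hτ.1,
      fun τ hτ => hode τ hτ.1, hu'0⟩
  refine ⟨fun B hB huB hpos τ₁ hτ₁ huτ₁ => ?_, fun hpos hlim τ₁ hτ₁ huτ₁ => ?_⟩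
  · have hlim : Tendsto u (𝓝[<] B) (𝓝 0) := huB ▸ (hud B hB).continuousAt.continuousWithinAt
    simpa only [ChangesSignAt, Ioi_inter_Iio] using
      inhomogeneity_structure_general hm0 ha hb (isLowerSet_Iio B) (hu _) hpos
        (fun t ht => Ico_mem_nhdsLT ht) hlim hτ₁ huτ₁
  · have hpos' : ∀ τ ∈ Ici (0 : ℝ) ∩ univ, 0 < u τ := fun τ hτ =>
      (show 0 ≤ τ from hτ.1).eq_or_lt.elim (fun h => h ▸ hα) (hpos τ)
    simpa only [ChangesSignAt, inter_univ] using
      inhomogeneity_structure_general hm0 ha hb isLowerSet_univ (hu _) hpos'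
        (fun t _ => by simpa only [inter_univ] using Ici_mem_atTop t) hlim ⟨hτ₁, trivial⟩ huτ₁
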